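/- arXiv:2401.04442 — 6 statements merged into one kernel-verified Lean document; each statement's English description precedes it below -/
import Mathlib

section
/- Let m ≥ 1, let s, t : {1,…,m} → ℕ, and let M be an m × m matrix with entries in the polynomial ring ℝ[X] such that: (i) for each i, deg M_{ii} = s_i + t_i; (ii) for all i, j with j > i, deg M_{ij} < s_i + t_j; (iii) for all i, j with j < i, deg M_{ij} ≤ s_i + t_j (here deg denotes the degree with deg 0 = ⊥, which is smaller than every natural number). Then deg(det M) = Σ_{i=1}^m (s_i + t_i), the leading coefficient of det M equals the product of the leading coefficients of the diagonal entries M_{ii}, and in particular det M ≠ 0 and there exists Λ ∈ ℝ such that for every real λ with |λ| > Λ the evaluated matrix (M_{ij}(λ)) is invertible. (This is the degree argument by which the paper produces the threshold N(k) beyond which the mode-decomposed elliptic systems, e.g. χ_k and ψ_k of Theorems 5.3 and 5.4 and the ADN systems of Appendix E, are uniquely solvable.) -/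
open Polynomial in
lemma ADN_prod_aux {ι : Type*} (S : Finset ι) (f : ι → ℝ[X]) (d : ι → ℕ)
    (h : ∀ i, (f i).natDegree ≤ d i) :
    (∏ i ∈ S, f i).natDegree ≤ ∑ i ∈ S, d i ∧
      (∏ i ∈ S, f i).coeff (∑ i ∈ S, d i) = ∏ i ∈ S, (f i).coeff (d i) := by
  classical
  induction S using Finset.induction_on with
  | empty => simp
  | insert a S ha ih =>
    rw [Finset.prod_insert ha, Finset.sum_insert ha, Finset.prod_insert ha, ← ih.2]
    exact ⟨natDegree_mul_le.trans (add_le_add (h a) ih.1),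
      coeff_mul_add_eq_of_natDegree_le (h a) ih.1⟩

/-- Degree argument for Agmon–Douglis–Nirenberg type matrices of polynomials: if the
diagonal entries have degree exactly `s i + t i`, the entries above the diagonal have
strictly smaller degree than `s i + t j`, and the entries below the diagonal have degree
at most `s i + t j`, then the determinant has degree `∑ (s i + t i)`, its leading
coefficient is the product of the leading coefficients of the diagonal entries, it is
nonzero, and the matrix evaluated at any real `λ` of sufficiently large absolute value
is invertible. -/
theorem det_degree_of_ADN_matrix (m : ℕ) (hm : 1 ≤ m)
    (s t : Fin m → ℕ) (M : Matrix (Fin m) (Fin m) (Polynomial ℝ))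
    (hdiag : ∀ i, (M i i).degree = ((s i + t i : ℕ) : WithBot ℕ))
    (hupper : ∀ i j, i < j → (M i j).degree < ((s i + t j : ℕ) : WithBot ℕ))
    (hlower : ∀ i j, j < i → (M i j).degree ≤ ((s i + t j : ℕ) : WithBot ℕ)) :
    M.det.degree = ((∑ i, (s i + t i) : ℕ) : WithBot ℕ) ∧
    M.det.leadingCoeff = ∏ i, (M i i).leadingCoeff ∧
    M.det ≠ 0 ∧
    ∃ Λ : ℝ, ∀ lam : ℝ, Λ < |lam| → IsUnit (M.map (Polynomial.eval lam)) := by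
  have hdeg : ∀ i j, (M i j).natDegree ≤ s i + t j := by
    intro i j
    apply Polynomial.natDegree_le_of_degree_le
    rcases lt_trichotomy i j with hij | hij | hij
    · exact (hupper i j hij).le
    · subst hij
      exact (hdiag i).le
    · exact hlower i j hij
  have hlc : ∀ i, (M i i).coeff (s i + t i) = (M i i).leadingCoeff := by
    intro i
    rw [Polynomial.leadingCoeff, Polynomial.natDegree_eq_of_degree_eq_some (hdiag i)]
  have hsum : ∀ σ : Equiv.Perm (Fin m), ∑ i, (s (σ i) + t i) = ∑ i, (s i + t i) := by
    intro σ
    rw [Finset.sum_add_distrib, Finset.sum_add_distrib, Equiv.sum_comp σ s]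
  have hP := fun σ : Equiv.Perm (Fin m) => ADN_prod_aux Finset.univ
    (fun i => M (σ i) i) (fun i => s (σ i) + t i) (fun i => hdeg _ _)
  have hnat : M.det.natDegree ≤ ∑ i, (s i + t i) := by
    rw [Matrix.det_apply]
    refine Polynomial.natDegree_sum_le_of_forall_le _ _ fun σ _ => ?_
    refine (Polynomial.natDegree_smul_le _ _).trans ?_
    rw [← hsum σ]
    exact (hP σ).1
  have hcoeff : M.det.coeff (∑ i, (s i + t i)) = ∏ i, (M i i).leadingCoeff := by
    have hA : (Matrix.of fun i j => (M i j).coeff (s i + t j)).det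
        = ∏ i, (M i i).leadingCoeff := by
      rw [Matrix.det_of_isLowerTriangular]
      · exact Finset.prod_congr rfl fun i _ => hlc i
      · intro i j hij
        exact Polynomial.coeff_eq_zero_of_degree_lt (hupper i j (by simpa using hij))
    rw [← hA, Matrix.det_apply, Matrix.det_apply, Polynomial.finset_sum_coeff]
    refine Finset.sum_congr rfl fun σ _ => ?_
    rw [Polynomial.coeff_smul, ← hsum σ, (hP σ).2]
    rfl
  have hne : ∏ i, (M i i).leadingCoeff ≠ 0 := by
    refine Finset.prod_ne_zero_iff.2 fun i _ => ?_
    rw [Polynomial.leadingCoeff_ne_zero]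
    intro h0
    have := hdiag i
    rw [h0, Polynomial.degree_zero] at this
    exact WithBot.bot_ne_coe this
  have hnd : M.det.natDegree = ∑ i, (s i + t i) :=
    le_antisymm hnat (Polynomial.le_natDegree_of_ne_zero (hcoeff ▸ hne))
  have hdet : M.det ≠ 0 := by
    intro h0
    rw [h0, Polynomial.coeff_zero] at hcoeff
    exact hne hcoeff.symm
  refine ⟨?_, ?_, hdet, ?_⟩
  · rw [Polynomial.degree_eq_natDegree hdet, hnd]
  · rw [Polynomial.leadingCoeff, hnd, hcoeff]
  · refine ⟨∑ r ∈ M.det.roots.toFinset, |r|, fun lam hlam => ?_⟩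
    rw [Matrix.isUnit_iff_isUnit_det, isUnit_iff_ne_zero]
    have hmap : (M.map (Polynomial.eval lam)).det = M.det.eval lam :=
      ((Polynomial.evalRingHom lam).map_det M).symm
    rw [hmap]
    intro h0
    have hmem : lam ∈ M.det.roots.toFinset := by
      rw [Multiset.mem_toFinset, Polynomial.mem_roots hdet]
      exact h0
    exact absurd (Finset.single_le_sum (f := fun r : ℝ => |r|)
      (fun r _ => abs_nonneg r) hmem) (not_le.2 hlam)
end

section
/- Let d ≥ 2 be an integer and a a real number with a ≠ −2 and a·(d−1) ≠ −d. Let k ∈ ℝ^d be a nonzero vector and h a symmetric d × d real matrix with zero trace. If for all indices A, B ∈ {1,…,d} one has ‖k‖² h_{AB} + (a/2)·( k_A (hk)_B + k_B (hk)_A ) − (a/d)·⟨k, hk⟩·δ_{AB} = 0, then h = 0. (This is the principal-symbol injectivity established in Lemma D.1 of the paper: the operator L_{a,c} = aP + Δ + 2𝓡 + c acting on trace-free symmetric 2-tensors on an (n−1)-dimensional manifold, d = n−1, is elliptic whenever a ∉ {−2, (1−n)/(n−2)}.) -/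
/-- Principal-symbol injectivity of Lemma D.1: for `a ∉ {-2, -d/(d-1)}`, a nonzero
covector `k` and a symmetric trace-free matrix `h`, the vanishing of the principal
symbol `‖k‖² h_{AB} + (a/2)(k_A (hk)_B + k_B (hk)_A) - (a/d)⟨k,hk⟩ δ_{AB}` forces
`h = 0`. -/
theorem tensor_symbol_injective (d : ℕ) (hd : 2 ≤ d) (a : ℝ)
    (ha1 : a ≠ -2) (ha2 : a * ((d : ℝ) - 1) ≠ -(d : ℝ))
    (k : Fin d → ℝ) (hk : k ≠ 0)
    (h : Matrix (Fin d) (Fin d) ℝ)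
    (hsymm : ∀ A B, h A B = h B A)
    (htrace : ∑ A, h A A = 0)
    (heq : ∀ A B, (∑ i, (k i) ^ 2) * h A B
        + (a / 2) * (k A * (∑ C, h B C * k C) + k B * (∑ C, h A C * k C))
        - (a / (d : ℝ)) * (∑ C, ∑ E, k C * h C E * k E) * (if A = B then (1 : ℝ) else 0)
        = 0) :
    h = 0 := by
  have hd0 : (d : ℝ) ≠ 0 := by
    have : d ≠ 0 := by omega
    exact_mod_cast this
  obtain ⟨s, hs⟩ : ∃ s, s = ∑ i, (k i) ^ 2 := ⟨_, rfl⟩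
  obtain ⟨v, hv⟩ : ∃ v : Fin d → ℝ, ∀ A, v A = ∑ C, h A C * k C := ⟨_, fun _ => rfl⟩
  obtain ⟨q, hq⟩ : ∃ q, q = ∑ C, ∑ E, k C * h C E * k E := ⟨_, rfl⟩
  simp only [← hs, ← hv, ← hq] at heq
  have hq' : ∑ B, v B * k B = q := by
    rw [hq]
    refine Finset.sum_congr rfl fun B _ => ?_
    rw [hv, Finset.sum_mul]
    exact Finset.sum_congr rfl fun C _ => by ring
  have hs0 : s ≠ 0 := by
    intro h0
    apply hk
    funext i
    rw [hs, Finset.sum_eq_zero_iff_of_nonneg (fun i _ => sq_nonneg (k i))] at h0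
    simpa using h0 i (Finset.mem_univ i)
  have h1 : ∀ A, s * v A + (a / 2) * (k A * q + s * v A) - (a / d) * q * k A = 0 := by
    intro A
    have hδ : ∑ B, (if A = B then (1 : ℝ) else 0) * k B = k A := by simp
    have e : ∑ B, (s * h A B + (a / 2) * (k A * v B + k B * v A)
        - (a / (d : ℝ)) * q * (if A = B then (1 : ℝ) else 0)) * k B = 0 :=
      Finset.sum_eq_zero fun B _ => by rw [heq A B, zero_mul]
    rw [← e]
    calc _ = s * (∑ B, h A B * k B) + (a / 2) * (k A * (∑ B, v B * k B)
            + (∑ B, (k B) ^ 2) * v A)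
            - (a / d) * q * (∑ B, (if A = B then (1 : ℝ) else 0) * k B) := by
          rw [hq', hδ, ← hs, ← hv]
      _ = _ := by
          simp only [Finset.mul_sum, Finset.sum_mul, ← Finset.sum_add_distrib,
            ← Finset.sum_sub_distrib]
          exact Finset.sum_congr rfl fun B _ => by ring
  have h2 : s * q + (a / 2) * (s * q + s * q) - (a / d) * q * s = 0 := by
    have e : ∑ A, (s * v A + (a / 2) * (k A * q + s * v A) - (a / d) * q * k A) * k A = 0 :=
      Finset.sum_eq_zero fun A _ => by rw [h1 A, zero_mul]
    rw [← e]
    calc _ = s * (∑ A, v A * k A) + (a / 2) * ((∑ A, (k A) ^ 2) * q + s * (∑ A, v A * k A))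
            - (a / d) * q * (∑ A, (k A) ^ 2) := by
          rw [hq', ← hs]
      _ = _ := by
          simp only [Finset.mul_sum, Finset.sum_mul, ← Finset.sum_add_distrib,
            ← Finset.sum_sub_distrib]
          exact Finset.sum_congr rfl fun B _ => by ring
  have hq0 : q = 0 := by
    have e : (s * (a * ((d : ℝ) - 1) + d)) * q = 0 := by
      field_simp at h2
      linear_combination h2 / 2
    rcases mul_eq_zero.mp e with e | e
    · rcases mul_eq_zero.mp e with e | e
      · exact absurd e hs0
      · exact absurd (by linarith) ha2
    · exact e
  have hv0 : ∀ A, v A = 0 := by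
    intro A
    have e : (s * (a + 2)) * v A = 0 := by
      have := h1 A
      rw [hq0] at this
      linear_combination 2 * this
    rcases mul_eq_zero.mp e with e | e
    · rcases mul_eq_zero.mp e with e | e
      · exact absurd e hs0
      · exact absurd (by linarith) ha1
    · exact e
  ext A B
  have e := heq A B
  rw [hv0, hv0, hq0] at e
  have e' : s * h A B = 0 := by linear_combination e
  simpa [hs0] using e'
end

section
/- Let d ≥ 2 be an integer and a a real number with a ≠ −2 and a·(d−1) ≠ −d. Let k ∈ ℝ^d be a nonzero vector and ξ ∈ ℝ^d. If for all indices B ∈ {1,…,d} one has a·( (1/2)‖k‖² ξ_B + ((d−2)/(2d))·⟨k, ξ⟩·k_B ) + ‖k‖² ξ_B = 0, then ξ = 0. (This is the principal-symbol injectivity establishing Lemma D.2 of the paper: the operator a·div₂∘C + Δ + c acting on vector fields on an (n−1)-dimensional manifold, d = n−1, is elliptic whenever a ∉ {−2, (1−n)/(n−2)}.) -/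
/-- Principal-symbol injectivity of Lemma D.2: for `a ∉ {-2, -d/(d-1)}`, a nonzero
covector `k` and a vector `ξ`, the vanishing of the symbol
`a((1/2)‖k‖² ξ_B + ((d-2)/(2d))⟨k,ξ⟩ k_B) + ‖k‖² ξ_B` forces `ξ = 0`. -/
theorem vector_symbol_injective (d : ℕ) (hd : 2 ≤ d) (a : ℝ)
    (ha1 : a ≠ -2) (ha2 : a * ((d : ℝ) - 1) ≠ -(d : ℝ))
    (k ξ : Fin d → ℝ) (hk : k ≠ 0)
    (heq : ∀ B, a * ((1 / 2) * (∑ i, (k i) ^ 2) * ξ B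
        + (((d : ℝ) - 2) / (2 * (d : ℝ))) * (∑ i, k i * ξ i) * k B)
        + (∑ i, (k i) ^ 2) * ξ B = 0) :
    ξ = 0 := by
  have hd0 : (d : ℝ) ≠ 0 := by
    have : d ≠ 0 := by omega
    exact_mod_cast this
  have hS : (∑ i, (k i) ^ 2) ≠ 0 := by
    intro h
    apply hk
    funext i
    have h2 := (Finset.sum_eq_zero_iff_of_nonneg (fun i _ => sq_nonneg (k i))).1 h i
      (Finset.mem_univ i)
    exact pow_eq_zero_iff (two_ne_zero) |>.1 h2
  generalize hSd : (∑ i, (k i) ^ 2) = S at *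
  generalize hPd : (∑ i, k i * ξ i) = P at *
  have hc : (a / 2 + 1) * S * P + a * (((d : ℝ) - 2) / (2 * (d : ℝ))) * P * S = 0 := by
    have h1 : ∑ B, ((a / 2 + 1) * S * (k B * ξ B)
        + a * (((d : ℝ) - 2) / (2 * (d : ℝ))) * P * (k B) ^ 2) = 0 := by
      apply Finset.sum_eq_zero
      intro B _
      linear_combination (k B) * heq B
    rwa [Finset.sum_add_distrib, ← Finset.mul_sum, ← Finset.mul_sum, hSd, hPd] at h1
  have hP : P = 0 := by
    have h2 : (a * ((d : ℝ) - 1) + d) * (S * P) = 0 := by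
      field_simp at hc
      linear_combination (1 / 2) * hc
    have h3 : a * ((d : ℝ) - 1) + d ≠ 0 := fun h => ha2 (by linarith)
    simpa [h3, hS] using h2
  funext B
  have h4 : (a + 2) * (S * ξ B) = 0 := by
    have := heq B
    rw [hP] at this
    linear_combination 2 * this
  have h5 : a + 2 ≠ 0 := fun h => ha1 (by linarith)
  simpa [h5, hS] using h4
end

section
/- Let d ≥ 2 be an integer, k ∈ ℝ^d a vector, and φ ∈ ℝ. For a d × d real matrix X define its trace-free symmetric part TS(X)_{AB} := (1/2)(X_{AB} + X_{BA}) − (1/d)(Σ_C X_{CC})·δ_{AB}. Let T := TS(φ · k kᵀ) (so T_{CB} = φ(k_C k_B − (1/d)‖k‖² δ_{CB})) and let S := TS(k (Tk)ᵀ), where (Tk)_B = Σ_C T_{BC} k_C. Then Σ_{A,B} k_A k_B S_{AB} = ((d−1)/d)² ‖k‖⁶ φ. In particular, for k ≠ 0 the map φ ↦ Σ_{A,B} k_A k_B S_{AB} is injective. (This is the principal-symbol computation σ(k)(ξᵘ) = ((n−2)/(n−1))² |k|⁶ ξᵘ, with d = n−1, in the proof of Proposition E.4 of the paper, establishing ellipticity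 of div₁∘div₂∘P∘C∘D̊ and hence of div₁∘div₂∘Ľₙ.) -/
/-- The trace-free symmetric part of a `d × d` real matrix `X`:
`TS(X)_{AB} = (1/2)(X_{AB} + X_{BA}) - (1/d)(∑_C X_{CC}) δ_{AB}`. -/
noncomputable def TS (d : ℕ) (X : Fin d → Fin d → ℝ) : Fin d → Fin d → ℝ :=
  fun A B => (1 / 2) * (X A B + X B A)
    - (1 / (d : ℝ)) * (∑ C, X C C) * (if A = B then 1 else 0)

theorem TS_mulVec (d : ℕ) (k : Fin d → ℝ) (a : ℝ) (B : Fin d) :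
    ∑ C, (TS d (fun A'' B'' => a * (k A'' * k B''))) B C * k C
      = (a * (1 - 1 / (d : ℝ)) * ∑ i, (k i) ^ 2) * k B := by
  have h : ∀ C, (TS d (fun A'' B'' => a * (k A'' * k B''))) B C * k C
      = a * k B * (k C) ^ 2
        - (if B = C then (1 / (d : ℝ)) * (a * ∑ i, (k i) ^ 2) * k C else 0) := by
    intro C
    have h2 : ∑ C, a * (k C * k C) = a * ∑ i, (k i) ^ 2 := by
      rw [Finset.mul_sum]
      exact Finset.sum_congr rfl fun i _ => by ring
    simp only [TS, h2]
    split_ifs <;> ring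
  rw [Finset.sum_congr rfl fun C _ => h C, Finset.sum_sub_distrib, ← Finset.mul_sum,
    Finset.sum_ite_eq]
  simp only [Finset.mem_univ, if_true]
  ring

/-- Principal-symbol computation of Proposition E.4: with `T = TS(φ k kᵀ)` and
`S = TS(k (Tk)ᵀ)`, one has `∑_{A,B} k_A k_B S_{AB} = ((d-1)/d)² ‖k‖⁶ φ`; in particular
for `k ≠ 0` the map `φ ↦ ∑_{A,B} k_A k_B S_{AB}` is injective. -/
theorem symbol_computation_div_div_P_C_D (d : ℕ) (hd : 2 ≤ d) (k : Fin d → ℝ) :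
    (∀ φ : ℝ,
      ∑ A, ∑ B, k A * k B *
        (TS d (fun A' B' =>
          k A' * (∑ C, (TS d (fun A'' B'' => φ * (k A'' * k B''))) B' C * k C))) A B
      = (((d : ℝ) - 1) / (d : ℝ)) ^ 2 * (∑ i, (k i) ^ 2) ^ 3 * φ)
    ∧ (k ≠ 0 → Function.Injective (fun φ : ℝ =>
      ∑ A, ∑ B, k A * k B *
        (TS d (fun A' B' =>
          k A' * (∑ C, (TS d (fun A'' B'' => φ * (k A'' * k B''))) B' C * k C))) A B)) := by
  have hd0 : (d : ℝ) ≠ 0 := by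
    have : d ≠ 0 := by omega
    exact_mod_cast this
  have key : ∀ φ : ℝ,
      ∑ A, ∑ B, k A * k B *
        (TS d (fun A' B' =>
          k A' * (∑ C, (TS d (fun A'' B'' => φ * (k A'' * k B''))) B' C * k C))) A B
      = (((d : ℝ) - 1) / (d : ℝ)) ^ 2 * (∑ i, (k i) ^ 2) ^ 3 * φ := by
    intro φ
    simp only [TS_mulVec]
    set c := φ * (1 - 1 / (d : ℝ)) * ∑ i, (k i) ^ 2 with hc
    have e : (fun A' B' : Fin d => k A' * (c * k B')) = fun A' B' => c * (k A' * k B') := by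
      funext A' B'
      ring
    rw [e]
    have h : ∀ A, ∑ B, k A * k B * (TS d (fun A' B' => c * (k A' * k B'))) A B
        = (c * (1 - 1 / (d : ℝ)) * ∑ i, (k i) ^ 2) * (k A) ^ 2 := by
      intro A
      have h1 := TS_mulVec d k c A
      calc _ = k A * ∑ B, (TS d (fun A' B' => c * (k A' * k B'))) A B * k B := by
            rw [Finset.mul_sum]
            exact Finset.sum_congr rfl fun i _ => by ring
        _ = _ := by
            rw [h1]
            ring
    rw [Finset.sum_congr rfl fun A _ => h A, ← Finset.mul_sum, hc]
    field_simp
  refine ⟨key, fun hk x y hxy => ?_⟩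
  simp only [key] at hxy
  have hN : (∑ i, (k i) ^ 2) ≠ 0 := by
    intro h0
    apply hk
    funext i
    have := (Finset.sum_eq_zero_iff_of_nonneg (fun i _ => sq_nonneg (k i))).1 h0 i
      (Finset.mem_univ i)
    simpa using this
  have hd1 : (d : ℝ) - 1 ≠ 0 := by
    have : (2 : ℝ) ≤ d := by exact_mod_cast hd
    linarith
  exact mul_left_cancel₀ (mul_ne_zero (pow_ne_zero 2 (div_ne_zero hd1 hd0)) (pow_ne_zero 3 hN)) hxy
end

section
/- Let d ≥ 2 be an integer with d ≠ 3. Let k ∈ ℝ^d be a nonzero vector and ξ ∈ ℝ^d. Define TS(k, ξ)_{AB} := (1/2)(k_A ξ_B + k_B ξ_A) − (1/d)·⟨k, ξ⟩·δ_{AB}. If for all indices B ∈ {1,…,d} one has ‖k‖⁴ · Σ_A k_A TS(k, ξ)_{AB} − (2(d−2)/(d−1)) · ‖k‖² · ( Σ_{C,D} k_C k_D TS(k, ξ)_{CD} ) · k_B = 0, then ξ = 0. (This is the principal-symbol injectivity computation (26VIII23.2)–(26VIII23.3) in the proof of Proposition E.5 of the paper, with d = n−1 and n ≠ 4, establishing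 ellipticity of the operator (L_n)† ∘ C on vector fields.) -/
/-- The trace-free symmetric part of `k ξᵀ`:
`TS(k,ξ)_{AB} = (1/2)(k_A ξ_B + k_B ξ_A) - (1/d)⟨k,ξ⟩ δ_{AB}`. -/
noncomputable def TSv (d : ℕ) (k ξ : Fin d → ℝ) (A B : Fin d) : ℝ :=
  (1 / 2) * (k A * ξ B + k B * ξ A)
    - (1 / (d : ℝ)) * (∑ i, k i * ξ i) * (if A = B then 1 else 0)

/-- Principal-symbol injectivity in the proof of Proposition E.5: for `d ≠ 3` and a
nonzero covector `k`, the vanishing of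
`‖k‖⁴ ∑_A k_A TS(k,ξ)_{AB} - (2(d-2)/(d-1)) ‖k‖² (∑_{C,D} k_C k_D TS(k,ξ)_{CD}) k_B`
forces `ξ = 0`. -/
theorem Ln_adjoint_symbol_injective (d : ℕ) (hd : 2 ≤ d) (hd3 : d ≠ 3)
    (k ξ : Fin d → ℝ) (hk : k ≠ 0)
    (heq : ∀ B, (∑ i, (k i) ^ 2) ^ 2 * (∑ A, k A * TSv d k ξ A B)
        - (2 * ((d : ℝ) - 2) / ((d : ℝ) - 1)) * (∑ i, (k i) ^ 2) *
          (∑ C, ∑ E, k C * k E * TSv d k ξ C E) * k B = 0) :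
    ξ = 0 := by
  have hdR : (2:ℝ) ≤ d := by exact_mod_cast hd
  have hd0 : (d:ℝ) ≠ 0 := by linarith
  have hd1 : (d:ℝ) - 1 ≠ 0 := by intro h; linarith
  have hd3' : (3:ℝ) - d ≠ 0 := by
    intro h
    apply hd3
    have h3 : (d:ℝ) = 3 := by linarith
    exact_mod_cast h3
  have hS : (∑ i, (k i) ^ 2) ≠ 0 := by
    intro h
    apply hk
    rw [Finset.sum_eq_zero_iff_of_nonneg (fun i _ => sq_nonneg (k i))] at h
    funext i
    simpa using h i (Finset.mem_univ i)
  have h1 : ∀ B, (∑ A, k A * TSv d k ξ A B)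
      = (1/2) * ((∑ i, (k i) ^ 2) * ξ B + k B * (∑ i, k i * ξ i))
        - (1 / (d:ℝ)) * (∑ i, k i * ξ i) * k B := by
    intro B
    have h : ∀ A, k A * TSv d k ξ A B = (1/2) * ((k A)^2 * ξ B + k B * (k A * ξ A))
        - (1 / (d:ℝ)) * (∑ i, k i * ξ i) * (if A = B then k A else 0) := by
      intro A
      unfold TSv
      split_ifs <;> ring
    rw [Finset.sum_congr rfl (fun A _ => h A), Finset.sum_sub_distrib, ← Finset.mul_sum,
      ← Finset.mul_sum, Finset.sum_add_distrib, ← Finset.sum_mul, ← Finset.mul_sum]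
    simp
  have h0 : ∀ a b c : ℝ, ∑ B, k B * ((1/2) * (a * ξ B + k B * b) - c * b * k B)
      = (1/2) * (a * (∑ i, k i * ξ i) + (∑ i, (k i) ^ 2) * b) - c * b * (∑ i, (k i) ^ 2) := by
    intro a b c
    simp only [Finset.mul_sum, Finset.sum_mul, ← Finset.sum_add_distrib,
      ← Finset.sum_sub_distrib]
    exact Finset.sum_congr rfl (fun i _ => by ring)
  have h2 : (∑ C, ∑ E, k C * k E * TSv d k ξ C E)
      = (∑ i, (k i) ^ 2) * (∑ i, k i * ξ i) * (1 - 1 / (d:ℝ)) := by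
    rw [Finset.sum_comm]
    have h : ∀ E, ∑ C, k C * k E * TSv d k ξ C E = k E * ∑ C, k C * TSv d k ξ C E := by
      intro E
      rw [Finset.mul_sum]
      exact Finset.sum_congr rfl (fun i _ => by ring)
    simp only [h, h1]
    rw [h0]
    ring
  simp only [h1, h2] at heq
  have h4 := Finset.sum_congr (rfl : (Finset.univ : Finset (Fin d)) = Finset.univ)
    (fun B _ => congrArg (fun x => k B * x) (heq B))
  simp only [mul_zero, Finset.sum_const_zero] at h4
  have h5 := h0 (∑ i, (k i) ^ 2) (∑ i, k i * ξ i) (1 / (d:ℝ))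
  generalize hSS : (∑ i, (k i) ^ 2) = S at *
  generalize hpp : (∑ i, k i * ξ i) = p at *
  have h6 : S ^ 2 * ((1/2) * (S * p + S * p) - 1 / (d:ℝ) * p * S)
      - (2 * ((d : ℝ) - 2) / ((d : ℝ) - 1)) * S * (S * p * (1 - 1 / (d:ℝ))) * S = 0 := by
    rw [← h4, ← h5]
    conv_lhs => rw [Finset.mul_sum]; arg 2; rw [← hSS, Finset.mul_sum, hSS]
    rw [← Finset.sum_sub_distrib]
    exact Finset.sum_congr rfl (fun i _ => by ring)
  have h7 : S ^ 3 * p * (3 - (d:ℝ)) = 0 := by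
    field_simp at h6
    linear_combination (1/2) * h6
  have hp : p = 0 := by
    simpa [hS, hd3'] using h7
  funext B
  have h9 := heq B
  rw [hp] at h9
  have h10 : S ^ 3 * ξ B = 0 := by linear_combination 2 * h9
  simpa [hS] using h10
end

section
/- For all real numbers n, i, P, Δ, R, ε with i ≠ 0, i ≠ 1, n + 1 − 2i ≠ 0 and n − 1 + 2i ≠ 0, the following identity holds: 𝒦_{(n−5−2i)/2} · K^α_{(n−7−2i)/2} = 𝒦_{(n−7+2i)/2} · K^α_{(n−9+2i)/2}, where for a real number k (with nonvanishing denominators) 𝒦_k := −(7 − n + 2k)⁻¹ · ( 2(n−1)P / ((3+k)(3−n+k)) + 2R + Δ − (n−4−k)(2+k)ε ) and K^α_k := (k+4)(n−k−4)/(n−7−2k). (This is identity (5III23.11) of the paper, defining the operator 𝒦̂(2i, P) and enabling the cancellation (5III23.10) in the recursion for the fields q⁽ⁱ⁾.) -/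
/-- The coefficient operator `𝒦_k(Δ, P)` of (6III23.w3)/(3III23.5a), with the commuting
operator arguments `P, Δ, R` and the curvature constant `ε` treated as real numbers. -/
noncomputable def Kop (n P Δ R ε k : ℝ) : ℝ :=
  -(7 - n + 2 * k)⁻¹ *
    (2 * (n - 1) * P / ((3 + k) * (3 - n + k)) + 2 * R + Δ - (n - 4 - k) * (2 + k) * ε)

/-- The constant `K^α_k` of (6III23.w5)/(3III23.5b). -/
noncomputable def Kalpha (n k : ℝ) : ℝ := (k + 4) * (n - k - 4) / (n - 7 - 2 * k)

/-- Identity (5III23.11) of the paper: the two factorizations defining `𝒦̂(2i, P)`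
agree, `𝒦_{(n-5-2i)/2} K^α_{(n-7-2i)/2} = 𝒦_{(n-7+2i)/2} K^α_{(n-9+2i)/2}`. -/
theorem Khat_identity (n i P Δ R ε : ℝ)
    (hi0 : i ≠ 0) (hi1 : i ≠ 1)
    (h1 : n + 1 - 2 * i ≠ 0) (h2 : n - 1 + 2 * i ≠ 0) :
    Kop n P Δ R ε ((n - 5 - 2 * i) / 2) * Kalpha n ((n - 7 - 2 * i) / 2)
      = Kop n P Δ R ε ((n - 7 + 2 * i) / 2) * Kalpha n ((n - 9 + 2 * i) / 2) := by
  unfold Kop Kalpha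
  have e1 : (3 + (n - 5 - 2 * i) / 2) * (3 - n + (n - 5 - 2 * i) / 2)
      = (3 + (n - 7 + 2 * i) / 2) * (3 - n + (n - 7 + 2 * i) / 2) := by ring
  have e2 : 7 - n + 2 * ((n - 5 - 2 * i) / 2) = 2 - 2 * i := by ring
  have e3 : 7 - n + 2 * ((n - 7 + 2 * i) / 2) = 2 * i := by ring
  have e4 : n - 7 - 2 * ((n - 7 - 2 * i) / 2) = 2 * i := by ring
  have e5 : n - 7 - 2 * ((n - 9 + 2 * i) / 2) = 2 - 2 * i := by ring
  rw [e1, e2, e3, e4, e5]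
  generalize 2 * (n - 1) * P / ((3 + (n - 7 + 2 * i) / 2) * (3 - n + (n - 7 + 2 * i) / 2)) = X
  simp only [div_eq_mul_inv _ (2 * i), div_eq_mul_inv _ (2 - 2 * i)]
  generalize (2 * i)⁻¹ = a
  generalize (2 - 2 * i)⁻¹ = b
  ring
end
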